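/- arXiv:0802.3200 — 2 statements merged into one kernel-verified Lean document; each statement's English description precedes it below -/
import Mathlib

section
/- Let q be a prime power, let F_q be the finite field with q elements, let u be a nonzero element of F_q, and let n ≥ 1 be an integer. Let ψ be the canonical additive character of F_q (ψ(x) = exp(2πi·Tr_{F_q/F_p}(x)/p)) and for each multiplicative character χ of F_q^* let G(χ) = Σ_{x ∈ F_q^*} ψ(x)χ(x) be the associated Gauss sum. Then q(q−1)·N(u) = (q−1)^{n+1} + Σ_χ G(χ)^{n+1} · G(χ̄^{n+1}) · χ̄((−1)^{n+1} u), where the sum is over all multiplicative characters χ of F_q^* and χ̄ denotes the complex conjugate (inverse) character. -/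
/-!
Detecting the equation `f x = ∑ xᵢ + u / ∏ xᵢ - 1 = 0` on the torus with the additive characters
`ψ (t · f x)`, the `t = 0` term gives `(q - 1) ^ n`, and for `t ≠ 0` the inner sum is
`ψ (-t)` times the hyper-Kloosterman sum at `t ^ (n + 1) * u`. As a function on the unit group, the
hyper-Kloosterman sum has Mellin transform `χ ↦ G(χ) ^ (n + 1)`. Inverting this transform and then
summing over `t` against `ψ (-t)` leaves the remaining Gauss sum `G(χ̄ ^ (n + 1))`.
-/

open AddChar Finset

section MulCharOrthogonality

variable {M R : Type*} [CommMonoid M] [Finite M] [CommRing R] [IsDomain R]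
  [HasEnoughRootsOfUnity R (Monoid.exponent Mˣ)] [Fintype (MulChar M R)]

lemma sum_mulChar_apply_eq_zero {a : M} (ha : a ≠ 1) : ∑ χ : MulChar M R, χ a = 0 := by
  obtain ⟨χ, hχ⟩ := MulChar.exists_apply_ne_one_of_hasEnoughRootsOfUnity M R ha
  refine eq_zero_of_mul_eq_self_left hχ ?_
  simp only [mul_sum, ← MulChar.mul_apply]
  exact Equiv.sum_comp (Equiv.mulLeft χ) fun χ' ↦ χ' a

variable [DecidableEq M]

lemma sum_mulChar_apply (a : M) :
    ∑ χ : MulChar M R, χ a = if a = 1 then (Nat.card Mˣ : R) else 0 := by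
  split_ifs with ha
  · simp [ha, ← MulChar.card_eq_card_units_of_hasEnoughRootsOfUnity M R]
  · exact sum_mulChar_apply_eq_zero ha

lemma sum_mulChar_inv_apply_mul_apply (a b : Mˣ) :
    ∑ χ : MulChar M R, χ⁻¹ a * χ b = if b = a then (Nat.card Mˣ : R) else 0 := by
  have inv_apply_mul_apply (χ : MulChar M R) : χ⁻¹ a * χ b = χ (↑(a⁻¹ * b) : M) := by
    calc
      χ⁻¹ a * χ b = χ⁻¹ a * (χ a * χ (↑(a⁻¹ * b) : M)) := by
        rw [← map_mul, ← Units.val_mul, mul_inv_cancel_left]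
      _ = χ (↑(a⁻¹ * b) : M) := by
        rw [← mul_assoc, ← MulChar.mul_apply, MulChar.inv_mul, MulChar.one_apply_coe, one_mul]
  simp only [inv_apply_mul_apply, sum_mulChar_apply, Units.val_eq_one, inv_mul_eq_one, eq_comm]

end MulCharOrthogonality

section Kloosterman

variable {A R : Type*} [CommRing A] [Fintype A] [DecidableEq A] [CommRing R]

lemma gaussSum_eq_sum_units (χ : MulChar A R) (ψ : AddChar A R) :
    gaussSum χ ψ = ∑ a : Aˣ, χ a * ψ a := by
  refine (Fintype.sum_of_injective Units.val Units.val_injective _ _ (fun a ha ↦ ?_)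
    fun _ ↦ rfl).symm
  rw [χ.map_nonunit ha, zero_mul]

/-- The `n`-variable hyper-Kloosterman sum `∑_{x₁ ⋯ xₙ = a} ψ (x₁ + ⋯ + xₙ)` over units `xᵢ`,
the `n`-fold multiplicative convolution of `ψ` with itself. There is no normalising factor. -/
def kloostermanSum (ψ : AddChar A R) (n : ℕ) (a : Aˣ) : R :=
  ∑ x : Fin n → Aˣ with ∏ i, x i = a, ψ (∑ i, (x i : A))

lemma kloostermanSum_mulShift (ψ : AddChar A R) (n : ℕ) (t a : Aˣ) :
    kloostermanSum (ψ.mulShift t) n a = kloostermanSum ψ n (t ^ n * a) := by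
  simp only [kloostermanSum, sum_filter]
  symm
  rw [← Equiv.sum_comp (Equiv.mulLeft fun _ : Fin n ↦ t)]
  simp [prod_mul_distrib, mul_sum]

lemma kloostermanSum_succ (ψ : AddChar A R) (n : ℕ) (a : Aˣ) :
    kloostermanSum ψ (n + 1) a =
      ∑ x : Fin n → Aˣ, ψ (∑ i, (x i : A) + ↑(a / ∏ i, x i)) := by
  rw [kloostermanSum, sum_filter, ← (Fin.consEquiv fun _ ↦ Aˣ).sum_comp,
    Fintype.sum_prod_type_right]
  refine Fintype.sum_congr _ _ fun x ↦ ?_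
  simp [Fin.consEquiv, Fin.prod_univ_succ, Fin.sum_univ_succ, ← eq_div_iff_mul_eq', add_comm]

lemma sum_torus_eq_mul_kloostermanSum (ψ : AddChar A R) (n : ℕ) (t u : Aˣ) :
    ∑ x : Fin n → Aˣ, ψ (t * (∑ i, (x i : A) + ↑(u / ∏ i, x i) - 1)) =
      ψ (-t) * kloostermanSum ψ (n + 1) (t ^ (n + 1) * u) := by
  rw [← kloostermanSum_mulShift, kloostermanSum_succ, mul_sum]
  refine Fintype.sum_congr _ _ fun x ↦ ?_
  rw [mulShift_apply, ← map_add_eq_mul]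
  ring_nf

lemma gaussSum_pow_eq_sum_kloostermanSum (χ : MulChar A R) (ψ : AddChar A R) (n : ℕ) :
    gaussSum χ ψ ^ n = ∑ a : Aˣ, χ a * kloostermanSum ψ n a := by
  have prod_apply (x : Fin n → Aˣ) :
      ∏ i, χ (x i) * ψ (x i) = χ ↑(∏ i, x i) * ψ (∑ i, (x i : A)) := by
    rw [prod_mul_distrib, Units.coe_prod, map_prod]
    congr 1
    exact (map_prod ψ.toMonoidHom (fun i ↦ Multiplicative.ofAdd (x i : A)) univ).symm
  rw [gaussSum_eq_sum_units, Fintype.sum_pow, ← sum_fiberwise univ fun x : Fin n → Aˣ ↦ ∏ i, x i]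
  refine Fintype.sum_congr _ _ fun a ↦ ?_
  rw [kloostermanSum, mul_sum]
  refine sum_congr rfl fun x hx ↦ ?_
  rw [prod_apply, (mem_filter.mp hx).2]

lemma sum_mulChar_inv_apply_mul_gaussSum_pow [IsDomain R]
    [HasEnoughRootsOfUnity R (Monoid.exponent Aˣ)] [Fintype (MulChar A R)]
    (ψ : AddChar A R) (n : ℕ) (a : Aˣ) :
    ∑ χ : MulChar A R, χ⁻¹ a * gaussSum χ ψ ^ n = Nat.card Aˣ * kloostermanSum ψ n a := by
  simp only [gaussSum_pow_eq_sum_kloostermanSum, mul_sum, ← mul_assoc]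
  rw [sum_comm]
  simp [← sum_mul, sum_mulChar_inv_apply_mul_apply]

lemma sum_addChar_neg_mul_mulChar_pow_mul (χ : MulChar A R) (ψ : AddChar A R) (n : ℕ) (u : Aˣ) :
    ∑ t : Aˣ, ψ (-t) * χ ↑(t ^ n * u) = gaussSum (χ ^ n) ψ * χ ((-1) ^ n * u) := by
  rw [gaussSum_eq_sum_units, ← Equiv.sum_comp (Equiv.neg Aˣ), sum_mul]
  refine Fintype.sum_congr _ _ fun t ↦ ?_
  rw [Equiv.neg_apply, Units.val_neg, neg_neg, MulChar.pow_apply_coe, neg_pow]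
  push_cast
  simp only [map_mul, map_pow]
  ring

lemma card_units_mul_sum_kloostermanSum [IsDomain R]
    [HasEnoughRootsOfUnity R (Monoid.exponent Aˣ)] [Fintype (MulChar A R)]
    (ψ : AddChar A R) (n : ℕ) (u : Aˣ) :
    Nat.card Aˣ * ∑ t : Aˣ, ψ (-t) * kloostermanSum ψ n (t ^ n * u) =
      ∑ χ : MulChar A R, gaussSum χ ψ ^ n * gaussSum (χ⁻¹ ^ n) ψ * χ⁻¹ ((-1) ^ n * u) := by
  calc
    _ = ∑ t : Aˣ, ∑ χ : MulChar A R, ψ (-t) * (χ⁻¹ ↑(t ^ n * u) * gaussSum χ ψ ^ n) := by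
      simp only [← mul_sum, sum_mulChar_inv_apply_mul_gaussSum_pow, mul_left_comm]
    _ = ∑ χ : MulChar A R, gaussSum χ ψ ^ n * ∑ t : Aˣ, ψ (-t) * χ⁻¹ ↑(t ^ n * u) := by
      rw [sum_comm]
      simp only [mul_sum, mul_left_comm, mul_comm]
    _ = _ := by
      simp only [sum_addChar_neg_mul_mulChar_pow_mul, mul_assoc]

end Kloosterman

section Counting

variable {F : Type*} [Field F]

/-- The points counted by `N(u)`, identified with tuples of units in the form to which
`card_mul_card_zeros` applies. -/
def torusSolutionsEquiv (n : ℕ) (u : F) :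
    {x : Fin n → F // (∀ i, x i ≠ 0) ∧ (∑ i, x i) + u / (∏ i, x i) = 1} ≃
      {x : Fin n → Fˣ // ∑ i, (x i : F) + u / (∏ i, (x i : F)) - 1 = 0} where
  toFun x := ⟨fun i ↦ Units.mk0 (x.1 i) (x.2.1 i), by simpa [sub_eq_zero] using x.2.2⟩
  invFun x := ⟨fun i ↦ x.1 i, fun i ↦ (x.1 i).ne_zero, sub_eq_zero.mp x.2⟩
  left_inv x := by ext; simp
  right_inv x := by ext; simp

variable [Fintype F]

lemma natCast_card_units {R : Type*} [Ring R] : (Nat.card Fˣ : R) = (Fintype.card F : R) - 1 := by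
  classical
  simp [Fintype.card_units, Nat.cast_sub Fintype.card_pos]

variable {R : Type*} [CommRing R] [IsDomain R] {ψ : AddChar F R}

lemma sum_units_mulShift [DecidableEq F] (hψ : ψ.IsPrimitive) (b : F) :
    ∑ t : Fˣ, ψ (t * b) = (if b = 0 then (Fintype.card F : R) else 0) - 1 := by
  have sum_eq_gaussSum : ∑ t : Fˣ, ψ (t * b) = gaussSum 1 (ψ.mulShift b) := by
    simp [gaussSum_eq_sum_units, mulShift_apply, mul_comm]
  rw [sum_eq_gaussSum]
  split_ifs with hb
  · simp only [hb, mulShift_zero, gaussSum_one_one, natCast_card_units]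
  · rw [gaussSum_one_left (hψ hb), zero_sub]

lemma card_mul_card_zeros [DecidableEq F] {X : Type*} [Fintype X] (hψ : ψ.IsPrimitive)
    (f : X → F) :
    (Fintype.card F : R) * Nat.card {x // f x = 0} =
      Fintype.card X + ∑ t : Fˣ, ∑ x, ψ (t * f x) := by
  rw [sum_comm]
  simp [sum_units_mulShift hψ, Fintype.card_subtype, mul_comm, sum_ite]

theorem toric_count_gauss_sum_general [HasEnoughRootsOfUnity R (Monoid.exponent Fˣ)]
    (hψ : ψ.IsPrimitive) (n : ℕ) (u : Fˣ) :
    (Fintype.card F : R) * ((Fintype.card F : R) - 1) *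
        Nat.card {x : Fin n → F // (∀ i, x i ≠ 0) ∧ (∑ i, x i) + u / (∏ i, x i) = 1} =
      ((Fintype.card F : R) - 1) ^ (n + 1) +
        ∑ᶠ χ : MulChar F R,
          gaussSum χ ψ ^ (n + 1) * gaussSum (χ⁻¹ ^ (n + 1)) ψ * χ⁻¹ ((-1) ^ (n + 1) * u) := by
  classical
  have := Fintype.ofFinite (MulChar F R)
  have count := card_mul_card_zeros hψ
    fun x : Fin n → Fˣ ↦ ∑ i, (x i : F) + ↑(u / ∏ i, x i) - 1
  simp only [sum_torus_eq_mul_kloostermanSum, Fintype.card_pi_const,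
    ← Nat.card_eq_fintype_card (α := Fˣ), Nat.cast_pow, natCast_card_units] at count
  rw [finsum_eq_sum_of_fintype, ← card_units_mul_sum_kloostermanSum, natCast_card_units,
    Nat.card_congr (torusSolutionsEquiv n u.val)]
  simp only [Units.val_div_eq_div_val, Units.coe_prod] at count
  linear_combination ((Fintype.card F : R) - 1) * count

end Counting

section TraceCharacter

/-- The canonical additive character `x ↦ exp (2πi Tr(x) / N)` of a `ZMod N`-algebra.
It is trivial when the algebra is not free of finite rank, where `Algebra.trace` is `0`. -/
noncomputable def traceAddChar (N : ℕ) [NeZero N] (A : Type*) [CommRing A] [Algebra (ZMod N) A] :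
    AddChar A ℂ :=
  ZMod.stdAddChar.compAddMonoidHom (Algebra.trace (ZMod N) A).toAddMonoidHom

lemma traceAddChar_apply (N : ℕ) [NeZero N] {A : Type*} [CommRing A] [Algebra (ZMod N) A] (x : A) :
    traceAddChar N A x =
      Complex.exp (2 * Real.pi * Complex.I * ((Algebra.trace (ZMod N) A x).val : ℂ) / (N : ℂ)) :=
  ZMod.toCircle_apply _

lemma isPrimitive_traceAddChar (p : ℕ) [Fact p.Prime] (F : Type*) [Field F] [Finite F]
    [Algebra (ZMod p) F] : (traceAddChar p F).IsPrimitive := by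
  refine .of_ne_one fun h ↦ Algebra.trace_ne_zero (ZMod p) F ?_
  ext x
  apply ZMod.injective_stdAddChar
  simpa [traceAddChar] using DFunLike.congr_fun h x

end TraceCharacter

/-- **Equation (2.1)**: with `ψ` the canonical additive character of `𝔽_q` and `G(χ)` the Gauss
sum, for `u ∈ 𝔽_q^*` and `n ≥ 1`,
`q(q−1)·N(u) = (q−1)^{n+1} + Σ_χ G(χ)^{n+1} G(χ̄^{n+1}) χ̄((−1)^{n+1}u)`. -/
theorem toric_count_gauss_sum (p q n : ℕ) [Fact p.Prime] (hn : 1 ≤ n)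
    (F : Type*) [Field F] [Fintype F] [DecidableEq F] [Algebra (ZMod p) F]
    (hq : Fintype.card F = q)
    (u : F) (hu : u ≠ 0)
    (ψ : F → ℂ)
    (hψ : ∀ x : F, ψ x = Complex.exp (2 * Real.pi * Complex.I *
        ((Algebra.trace (ZMod p) F x).val : ℂ) / (p : ℂ)))
    (G : MulChar F ℂ → ℂ)
    (hG : ∀ χ : MulChar F ℂ, G χ = ∑ x : Fˣ, ψ x * χ x) :
    (q : ℂ) * ((q : ℂ) - 1) *
        (Nat.card {x : Fin n → F // (∀ i, x i ≠ 0) ∧ (∑ i, x i) + u / (∏ i, x i) = 1} : ℂ)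
      = ((q : ℂ) - 1) ^ (n + 1) +
          ∑ᶠ χ : MulChar F ℂ,
            G χ ^ (n + 1) * G (χ⁻¹ ^ (n + 1)) * χ⁻¹ ((-1) ^ (n + 1) * u) := by
  subst hq
  obtain rfl : ψ = traceAddChar p F := funext fun x ↦ (hψ x).trans (traceAddChar_apply p x).symm
  obtain rfl : G = fun χ ↦ gaussSum χ (traceAddChar p F) := funext fun χ ↦ by
    simp only [hG, gaussSum_eq_sum_units, mul_comm]
  exact toric_count_gauss_sum_general (isPrimitive_traceAddChar p F) n (Units.mk0 u hu)
end

section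
/- Let q be a prime power, let F_q be the finite field with q elements, let a, b be nonzero elements of F_q, and let n ≥ 1 be an integer. Let ψ be the canonical additive character of F_q (ψ(x) = exp(2πi·Tr_{F_q/F_p}(x)/p)) and for each multiplicative character χ of F_q^* let G(χ) = Σ_{x ∈ F_q^*} ψ(x)χ(x) be the associated Gauss sum. Then q(q−1)·N_{n+1}(a,b) = q^{n+1} − 1 + (−1)^n · Σ_χ G(χ)^{n+1} · G(χ̄^{n+1}) · χ̄((−1)^{n+1}·b/a^{n+1}), where the sum is over all multiplicative characters χ of F_q^* and χ̄ denotes the complex conjugate (inverse) character. -/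
/-!
By orthogonality of additive and multiplicative characters, the count is an average of the sums
`∑ α, χ (N α) * ψ (c * Tr α)` over all `χ` and `c`. These are Gauss sums over `E`, and the
Hasse–Davenport relation evaluates them as powers of Gauss sums over `F`; summing over `c` then
produces one more Gauss sum.

For the Hasse–Davenport relation, attach to `f = Xᵐ - a₁ Xᵐ⁻¹ + ⋯ + (-1)ᵐ aₘ` the multiplicative
weight `ψ (a₁) * χ (aₘ)`. Its `L`-series over monic polynomials is the linear polynomial
`1 + G(χ) * T`, whose logarithmic derivative has coefficients `-(-G(χ))ᵐ`. They are also the sums of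
the weight against the von Mangoldt function over the polynomials of degree `m`. Since the von
Mangoldt function at `g` counts the elements of `𝔽_{qᵐ}` with characteristic polynomial `g`, that
sum is the Gauss sum over `𝔽_{qᵐ}`.
-/

section VonMangoldt

open Finset Polynomial UniqueFactorizationMonoid

variable {K : Type*} [Field K]

theorem exists_monic_irreducible_pow_eq {g : K[X]} (hg : g.Monic) (hpp : IsPrimePow g) :
    ∃ (P : K[X]) (k : ℕ), P.Monic ∧ Irreducible P ∧ k ≠ 0 ∧ P ^ k = g := by
  classical
  obtain ⟨Q, k, hQ, hk, rfl⟩ := hpp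
  refine ⟨normalize Q, k, monic_normalize hQ.ne_zero,
    (normalize_associated Q).symm.irreducible hQ.irreducible, hk.ne', ?_⟩
  exact eq_of_monic_of_associated ((monic_normalize hQ.ne_zero).pow k) hg
    (normalize_associated Q).pow_pow

theorem monic_irreducible_eq_of_pow_eq_pow {P Q : K[X]} (hP : P.Monic) (hPirr : Irreducible P)
    (hQ : Q.Monic) (hQirr : Irreducible Q) {k l : ℕ} (hk : k ≠ 0) (h : P ^ k = Q ^ l) : P = Q := by
  have hdvd : P ∣ Q := hPirr.prime.dvd_of_dvd_pow (h ▸ dvd_pow_self P hk)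
  exact eq_of_monic_of_associated hP hQ (hPirr.associated_of_dvd hQirr hdvd)

open Classical in
/-- The von Mangoldt function of `K[X]`, with the degree in the role of the logarithm: it is `deg P`
at a power of an irreducible polynomial `P`, which the radical recovers up to a unit, and `0`
elsewhere. -/
noncomputable def polyVonMangoldt (g : K[X]) : ℕ :=
  if IsPrimePow g then (radical g).natDegree else 0

theorem polyVonMangoldt_pow_of_irreducible {P : K[X]} (hP : Irreducible P) {k : ℕ} (hk : k ≠ 0) :
    polyVonMangoldt (P ^ k) = P.natDegree := by
  classical
  rw [polyVonMangoldt, if_pos (hP.prime.isPrimePow.pow hk), radical_pow_of_prime hP.prime hk,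
    natDegree_eq_of_degree_eq (degree_normalize)]

theorem polyVonMangoldt_eq_zero {g : K[X]} (hg : ¬IsPrimePow g) : polyVonMangoldt g = 0 :=
  if_neg hg

theorem pow_dvd_iff_le_count_normalizedFactors [DecidableEq K] {f P : K[X]} (hf : f ≠ 0)
    (hP : P ∈ normalizedFactors f) {k : ℕ} : P ^ k ∣ f ↔ k ≤ (normalizedFactors f).count P := by
  rw [pow_dvd_iff_le_emultiplicity,
    emultiplicity_eq_count_normalizedFactors (irreducible_of_normalized_factor P hP) hf,
    normalize_normalized_factor P hP, Nat.cast_le]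

theorem natDegree_eq_sum_count_normalizedFactors [DecidableEq K] {f : K[X]} (hf : f ≠ 0) :
    f.natDegree = ∑ P ∈ (normalizedFactors f).toFinset,
      (normalizedFactors f).count P * P.natDegree := by
  rw [natDegree_eq_of_degree_eq (degree_eq_degree_of_associated (prod_normalizedFactors hf).symm),
    natDegree_multiset_prod _ (zero_notMem_normalizedFactors f), Finset.sum_multiset_map_count]
  simp only [smul_eq_mul]

theorem monic_of_mem_normalizedFactors [DecidableEq K] {f P : K[X]} (hP : P ∈ normalizedFactors f) :
    P.Monic :=
  normalize_normalized_factor P hP ▸ monic_normalize (ne_zero_of_mem_normalizedFactors hP)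

theorem sum_polyVonMangoldt_monic_dvd {f : K[X]} (hf : f ≠ 0) {s : Finset K[X]}
    (hs : ∀ g, g ∈ s ↔ g.Monic ∧ g ∣ f) : ∑ g ∈ s, polyVonMangoldt g = f.natDegree := by
  classical
  let primePowers := (normalizedFactors f).toFinset.sigma
    fun P ↦ Icc 1 ((normalizedFactors f).count P)
  have mem_primePowers {x : Σ _ : K[X], ℕ} : x ∈ primePowers ↔
      x.1 ∈ normalizedFactors f ∧ x.2 ≠ 0 ∧ x.1 ^ x.2 ∣ f := by
    simp only [primePowers, mem_sigma, Multiset.mem_toFinset, mem_Icc, Nat.one_le_iff_ne_zero]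
    exact and_congr_right fun hP ↦ and_congr_right fun _ ↦
      (pow_dvd_iff_le_count_normalizedFactors hf hP).symm
  calc ∑ g ∈ s, polyVonMangoldt g
    _ = ∑ x ∈ primePowers, x.1.natDegree := by
      refine (sum_of_injOn (fun x ↦ x.1 ^ x.2) ?_ ?_ ?_ ?_).symm
      · rintro ⟨P, k⟩ hx ⟨Q, l⟩ hy (hpow : P ^ k = Q ^ l)
        obtain ⟨hP, hk, -⟩ := mem_primePowers.1 hx
        obtain ⟨hQ, -, -⟩ := mem_primePowers.1 hy
        have hPirr := irreducible_of_normalized_factor P hP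
        obtain rfl := monic_irreducible_eq_of_pow_eq_pow (monic_of_mem_normalizedFactors hP) hPirr
          (monic_of_mem_normalizedFactors hQ) (irreducible_of_normalized_factor Q hQ) hk hpow
        rw [pow_injective_of_not_isUnit hPirr.not_isUnit hPirr.ne_zero hpow]
      · intro x hx
        obtain ⟨hP, -, hdvd⟩ := mem_primePowers.1 hx
        exact (hs _).2 ⟨(monic_of_mem_normalizedFactors hP).pow _, hdvd⟩
      · intro g hg hnot
        obtain ⟨hmonic, hdvd⟩ := (hs g).1 hg
        refine polyVonMangoldt_eq_zero fun hpp ↦ hnot ?_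
        obtain ⟨P, k, hP, hPirr, hk, rfl⟩ := exists_monic_irreducible_pow_eq hmonic hpp
        have hPmem : P ∈ normalizedFactors f := (mem_normalizedFactors_iff' hf).2
          ⟨hPirr, hP.normalize_eq_self, (dvd_pow_self P hk).trans hdvd⟩
        exact ⟨⟨P, k⟩, mem_primePowers.2 ⟨hPmem, hk, hdvd⟩, rfl⟩
      · intro x hx
        obtain ⟨hP, hk, -⟩ := mem_primePowers.1 hx
        exact (polyVonMangoldt_pow_of_irreducible (irreducible_of_normalized_factor _ hP) hk).symm
    _ = f.natDegree := by
      simp only [primePowers, sum_sigma, sum_const, Nat.card_Icc, add_tsub_cancel_right,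
        smul_eq_mul, natDegree_eq_sum_count_normalizedFactors hf]

end VonMangoldt

section MonicSums

open Finset Polynomial

theorem finite_setOf_monic_natDegree_eq (A : Type*) [Semiring A] [Finite A] (d : ℕ) :
    {f : A[X] | f.Monic ∧ f.natDegree = d}.Finite := by
  have : Finite (degreeLT A (d + 1)) := .of_equiv _ (degreeLTEquiv A (d + 1)).toEquiv.symm
  refine Set.Finite.subset (Set.toFinite (degreeLT A (d + 1) : Set A[X])) ?_
  rintro f ⟨-, rfl⟩
  exact mem_degreeLT.2 (degree_le_natDegree.trans_lt (Nat.cast_lt.2 f.natDegree.lt_succ_self))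

/-- The monic polynomials of degree `d` over a finite semiring. -/
noncomputable def monicsOfDegree (A : Type*) [Semiring A] [Finite A] (d : ℕ) : Finset A[X] :=
  (finite_setOf_monic_natDegree_eq A d).toFinset

/-- The sum of `w` over the monic polynomials of degree `d`: the coefficient of `T ^ d` in the
generating series `∑ w f * T ^ deg f`, an `L`-series when `w` is multiplicative. -/
noncomputable def monicSum {A M : Type*} [Semiring A] [Finite A] [AddCommMonoid M] (w : A[X] → M)
    (d : ℕ) : M :=
  ∑ f ∈ monicsOfDegree A d, w f

section CommRing

variable {A M : Type*} [CommRing A] [AddCommMonoid M]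

theorem mem_monicsOfDegree [Finite A] {d : ℕ} {f : A[X]} :
    f ∈ monicsOfDegree A d ↔ f.Monic ∧ f.natDegree = d := by
  simp [monicsOfDegree]

theorem monicSum_zero [Finite A] (w : A[X] → M) : monicSum w 0 = w 1 := by
  have : monicsOfDegree A 0 = {1} := by
    ext f
    rw [mem_monicsOfDegree, mem_singleton]
    exact ⟨fun h ↦ h.1.natDegree_eq_zero.1 h.2, fun h ↦ h ▸ ⟨monic_one, natDegree_one⟩⟩
  rw [monicSum, this, sum_singleton]

theorem monicSum_one [Fintype A] [Nontrivial A] (w : A[X] → M) :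
    monicSum w 1 = ∑ x, w (X - C x) := by
  refine (sum_bij (fun x _ ↦ X - C x) ?_ ?_ ?_ fun _ _ ↦ rfl).symm
  · exact fun x _ ↦ mem_monicsOfDegree.2 ⟨monic_X_sub_C x, natDegree_X_sub_C x⟩
  · exact fun x _ y _ h ↦ C_injective (sub_right_injective h)
  · intro f hf
    obtain ⟨hmonic, hdeg⟩ := mem_monicsOfDegree.1 hf
    refine ⟨-f.coeff 0, mem_univ _, ?_⟩
    rw [C_neg, sub_neg_eq_add, ← hmonic.eq_X_add_C hdeg]

theorem add_mem_monicsOfDegree [Finite A] [Nontrivial A] {d : ℕ} {f r : A[X]} (hr : r.degree < d)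
    (hf : f ∈ monicsOfDegree A d) : f + r ∈ monicsOfDegree A d := by
  obtain ⟨hmonic, hdeg⟩ := mem_monicsOfDegree.1 hf
  have hlt : r.degree < f.degree := by rwa [degree_eq_natDegree hmonic.ne_zero, hdeg]
  exact mem_monicsOfDegree.2
    ⟨hmonic.add_of_left hlt, by rw [natDegree_add_eq_left_of_degree_lt hlt, hdeg]⟩

theorem monicSum_comp_add_right [Finite A] [Nontrivial A] {d : ℕ} {r : A[X]} (hr : r.degree < d)
    (w : A[X] → M) :
    monicSum (fun f ↦ w (f + r)) d = monicSum w d :=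
  sum_bij' (fun f _ ↦ f + r) (fun f _ ↦ f + -r) (fun _ ↦ add_mem_monicsOfDegree hr)
    (fun _ ↦ add_mem_monicsOfDegree (by rwa [degree_neg])) (fun _ _ ↦ add_neg_cancel_right _ _)
    (fun _ _ ↦ neg_add_cancel_right _ _) fun _ _ ↦ rfl

open Classical in
theorem sum_monicsOfDegree_filter_dvd [Finite A] {g : A[X]} (hg : g.Monic) {d e : ℕ}
    (hd : g.natDegree + e = d) (w : A[X] → M) :
    ∑ f ∈ monicsOfDegree A d with g ∣ f, w f = monicSum (fun h ↦ w (g * h)) e := by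
  refine (sum_bij (fun h _ ↦ g * h) ?_ ?_ ?_ fun _ _ ↦ rfl).symm
  · intro h hh
    obtain ⟨hmonic, hdeg⟩ := mem_monicsOfDegree.1 hh
    refine mem_filter.2 ⟨mem_monicsOfDegree.2 ⟨hg.mul hmonic, ?_⟩, dvd_mul_right g h⟩
    rw [hg.natDegree_mul hmonic, hdeg, hd]
  · exact fun _ _ _ _ h ↦ hg.isRegular.left h
  · intro f hf
    obtain ⟨hfmem, h, rfl⟩ := mem_filter.1 hf
    obtain ⟨hmonic, hdeg⟩ := mem_monicsOfDegree.1 hfmem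
    have hh : h.Monic := hg.of_mul_monic_left hmonic
    rw [hg.natDegree_mul hh] at hdeg
    exact ⟨h, mem_monicsOfDegree.2 ⟨hh, by omega⟩, rfl⟩

end CommRing

variable {F R : Type*} [Field F] [Finite F] [CommRing R] {w : F[X] → R}

open Classical in
theorem sum_range_polyVonMangoldt_dvd {f : F[X]} (hf : f ≠ 0) :
    ∑ i ∈ range (f.natDegree + 1), ∑ g ∈ monicsOfDegree F i with g ∣ f, polyVonMangoldt g =
      f.natDegree := by
  rw [← sum_biUnion]
  · refine sum_polyVonMangoldt_monic_dvd hf fun g ↦ ?_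
    simp only [mem_biUnion, mem_range, mem_filter, mem_monicsOfDegree, Nat.lt_succ_iff]
    constructor
    · rintro ⟨i, -, ⟨hg, -⟩, hdvd⟩
      exact ⟨hg, hdvd⟩
    · exact fun ⟨hg, hdvd⟩ ↦ ⟨_, natDegree_le_of_dvd hdvd hf, ⟨hg, rfl⟩, hdvd⟩
  · intro i _ j _ hij
    refine disjoint_left.2 fun g hi hj ↦ hij ?_
    rw [← (mem_monicsOfDegree.1 (mem_filter.1 hi).1).2,
      (mem_monicsOfDegree.1 (mem_filter.1 hj).1).2]

-- The coefficientwise form of `T * L' = (∑ Λ g * w g * T ^ deg g) * L`.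
theorem mul_monicSum_eq_sum_antidiagonal (hw : ∀ f g, f.Monic → g.Monic → w (f * g) = w f * w g)
    (d : ℕ) :
    d * monicSum w d = ∑ ij ∈ antidiagonal d,
      monicSum (fun g ↦ polyVonMangoldt g * w g) ij.1 * monicSum w ij.2 := by
  classical
  calc d * monicSum w d
    _ = ∑ f ∈ monicsOfDegree F d, ∑ i ∈ range (d + 1), ∑ g ∈ monicsOfDegree F i,
          if g ∣ f then polyVonMangoldt g * w f else 0 := by
      rw [monicSum, mul_sum]
      refine sum_congr rfl fun f hf ↦ ?_
      obtain ⟨hmonic, rfl⟩ := mem_monicsOfDegree.1 hf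
      simp only [← sum_filter, ← sum_mul, ← Nat.cast_sum]
      rw [sum_range_polyVonMangoldt_dvd hmonic.ne_zero]
    _ = ∑ i ∈ range (d + 1), ∑ g ∈ monicsOfDegree F i,
          polyVonMangoldt g * ∑ f ∈ monicsOfDegree F d with g ∣ f, w f := by
      rw [sum_comm]
      refine sum_congr rfl fun i _ ↦ ?_
      rw [sum_comm]
      simp only [← sum_filter, mul_sum]
    _ = ∑ i ∈ range (d + 1),
          monicSum (fun g ↦ polyVonMangoldt g * w g) i * monicSum w (d - i) := by
      refine sum_congr rfl fun i hi ↦ ?_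
      rw [monicSum, sum_mul]
      refine sum_congr rfl fun g hg ↦ ?_
      obtain ⟨hmonic, rfl⟩ := mem_monicsOfDegree.1 hg
      rw [sum_monicsOfDegree_filter_dvd hmonic (Nat.add_sub_of_le (mem_range_succ_iff.1 hi)),
        monicSum, monicSum, mul_assoc, mul_sum (a := w g)]
      congr 1
      exact sum_congr rfl fun h hh ↦ hw g h hmonic (mem_monicsOfDegree.1 hh).1
    _ = _ := (Nat.sum_antidiagonal_eq_sum_range_succ
      (fun i j ↦ monicSum (fun g ↦ polyVonMangoldt g * w g) i * monicSum w j) d).symm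

theorem neg_monicSum_polyVonMangoldt (hw : ∀ f g, f.Monic → g.Monic → w (f * g) = w f * w g)
    (hone : w 1 = 1) (hvanish : ∀ d, monicSum w (d + 2) = 0) {m : ℕ} (hm : m ≠ 0) :
    -monicSum (fun g ↦ polyVonMangoldt g * w g) m = (-monicSum w 1) ^ m := by
  set S := monicSum fun g ↦ polyVonMangoldt g * w g with hS
  have hS_zero : S 0 = 0 := by
    rw [hS, monicSum_zero, polyVonMangoldt_eq_zero not_isPrimePow_one, Nat.cast_zero, zero_mul]
  have newton (d : ℕ) : (d + 1 : ℕ) * monicSum w (d + 1) = S d * monicSum w 1 + S (d + 1) := by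
    rw [mul_monicSum_eq_sum_antidiagonal hw, Nat.sum_antidiagonal_succ', ← hS, monicSum_zero, hone,
      mul_one, add_comm, sum_eq_single_of_mem (d, 0) (by simp)]
    rintro ⟨i, _ | j⟩ hij hne
    · exact absurd (by simpa using hij) hne
    · rw [hvanish j, mul_zero]
  obtain ⟨d, rfl⟩ := Nat.exists_eq_add_one_of_ne_zero hm
  induction d with
  | zero =>
    have h := newton 0
    rw [hS_zero, zero_mul, zero_add, zero_add, Nat.cast_one, one_mul] at h
    rw [zero_add, pow_one, h]
  | succ d ih =>
    have h := newton (d + 1)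
    rw [hvanish d, mul_zero] at h
    rw [pow_succ, ← ih d.succ_ne_zero]
    linear_combination h

end MonicSums

section CharWeight

open Finset Polynomial

section Multiplicative

variable {A R : Type*} [CommRing A] [CommMonoidWithZero R] (ψ : AddChar A R) (χ : MulChar A R)

/-- The weight `ψ (a₁) * χ (aₘ)` of `f = Xᵐ - a₁ Xᵐ⁻¹ + ⋯ + (-1)ᵐ aₘ`; if `f` is a characteristic
polynomial, then `a₁` is the trace and `aₘ` the norm. -/
noncomputable def charWeight (f : A[X]) : R :=
  ψ (-f.nextCoeff) * χ ((-1) ^ f.natDegree * f.coeff 0)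

theorem charWeight_one : charWeight ψ χ 1 = 1 := by
  simp [charWeight, nextCoeff]

theorem charWeight_mul {f g : A[X]} (hf : f.Monic) (hg : g.Monic) :
    charWeight ψ χ (f * g) = charWeight ψ χ f * charWeight ψ χ g := by
  rw [charWeight, hf.nextCoeff_mul hg, hf.natDegree_mul hg, mul_coeff_zero, neg_add,
    AddChar.map_add_eq_mul, pow_add, mul_mul_mul_comm, map_mul, mul_mul_mul_comm, charWeight,
    charWeight]

theorem charWeight_X_sub_C [Nontrivial A] (x : A) : charWeight ψ χ (X - C x) = ψ x * χ x := by
  simp [charWeight]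

theorem charWeight_add_C_mul_X_pow {d : ℕ} {f : A[X]} (hf : f.natDegree = d + 2) (t : A) :
    charWeight ψ χ (f + C t * X ^ (d + 1)) = ψ (-t) * charWeight ψ χ f := by
  have hdeg : (f + C t * X ^ (d + 1)).natDegree = d + 2 := by
    rw [natDegree_add_eq_left_of_natDegree_lt, hf]
    exact (natDegree_C_mul_X_pow_le t (d + 1)).trans_lt (by omega)
  have hnext : (f + C t * X ^ (d + 1)).nextCoeff = t + f.nextCoeff := by
    rw [nextCoeff_of_natDegree_pos (by omega), nextCoeff_of_natDegree_pos (by omega), hdeg, hf,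
      coeff_add, coeff_C_mul_X_pow, if_pos (by omega), add_comm]
  have hcoeff : (f + C t * X ^ (d + 1)).coeff 0 = f.coeff 0 := by
    rw [coeff_add, coeff_C_mul_X_pow, if_neg (by omega), add_zero]
  rw [charWeight, charWeight, hdeg, hnext, hcoeff, hf, neg_add, AddChar.map_add_eq_mul, mul_assoc]

end Multiplicative

variable {A R : Type*} [CommRing A] [CommRing R] (χ : MulChar A R)

theorem monicSum_charWeight_one [Fintype A] [Nontrivial A] (ψ : AddChar A R) :
    monicSum (charWeight ψ χ) 1 = gaussSum χ ψ := by
  simp only [monicSum_one, charWeight_X_sub_C, gaussSum, mul_comm]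

-- Shifting the subleading coefficient by `t` permutes the sum and multiplies it by `ψ (-t)`.
theorem monicSum_charWeight_add_two [Finite A] [Nontrivial A] [IsDomain R] {ψ : AddChar A R}
    (hψ : ψ ≠ 1) (d : ℕ) : monicSum (charWeight ψ χ) (d + 2) = 0 := by
  obtain ⟨t, ht⟩ := AddChar.ne_one_iff.1 hψ
  have hdeg : (C (-t) * X ^ (d + 1) : A[X]).degree < (d + 2 : ℕ) :=
    (degree_C_mul_X_pow_le _ _).trans_lt (Nat.cast_lt.2 (by omega))
  refine eq_zero_of_mul_eq_self_left ht ?_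
  conv_rhs => rw [← monicSum_comp_add_right hdeg]
  rw [monicSum, monicSum, mul_sum]
  refine sum_congr rfl fun f hf ↦ ?_
  rw [charWeight_add_C_mul_X_pow ψ χ (mem_monicsOfDegree.1 hf).2, neg_neg]

end CharWeight

section FieldCharpoly

open IntermediateField Module Polynomial

variable (F : Type*) {E : Type*} [Field F] [Field E] [Algebra F E]

/-- The characteristic polynomial of multiplication by `α` on `E` over `F`, as the power of the
minimal polynomial of `α` that has degree `[E : F]`. -/
noncomputable def fieldCharpoly (α : E) : F[X] :=
  minpoly F α ^ finrank F⟮α⟯ E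

variable [FiniteDimensional F E] (α : E)

theorem fieldCharpoly_monic : (fieldCharpoly F α).Monic :=
  (minpoly.monic (.of_finite F α)).pow _

theorem natDegree_fieldCharpoly : (fieldCharpoly F α).natDegree = finrank F E := by
  rw [fieldCharpoly, natDegree_pow, ← adjoin.finrank (.of_finite F α), mul_comm,
    finrank_mul_finrank]

theorem nextCoeff_fieldCharpoly : (fieldCharpoly F α).nextCoeff = -Algebra.trace F E α := by
  rw [fieldCharpoly, (minpoly.monic (.of_finite F α)).nextCoeff_pow,
    trace_eq_finrank_mul_minpoly_nextCoeff, nsmul_eq_mul, mul_neg, neg_neg]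

theorem coeff_zero_fieldCharpoly :
    (-1) ^ finrank F E * (fieldCharpoly F α).coeff 0 = Algebra.norm F α := by
  have hα : IsIntegral F α := .of_finite F α
  have hgen : Algebra.norm F (AdjoinSimple.gen F α) =
      (-1) ^ finrank F F⟮α⟯ * (minpoly F α).coeff 0 := by
    simpa only [adjoin.powerBasis_gen, adjoin.powerBasis_dim, minpoly_gen, adjoin.finrank hα] using
      Algebra.PowerBasis.norm_gen_eq_coeff_zero_minpoly (adjoin.powerBasis hα)
  rw [Algebra.norm_eq_norm_adjoin, hgen, mul_pow, ← pow_mul, finrank_mul_finrank, fieldCharpoly,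
    coeff_zero_eq_eval_zero, coeff_zero_eq_eval_zero, eval_pow]

theorem charWeight_fieldCharpoly {R : Type*} [CommMonoidWithZero R] (ψ : AddChar F R)
    (χ : MulChar F R) :
    charWeight ψ χ (fieldCharpoly F α) = ψ (Algebra.trace F E α) * χ (Algebra.norm F α) := by
  rw [charWeight, nextCoeff_fieldCharpoly, natDegree_fieldCharpoly, coeff_zero_fieldCharpoly,
    neg_neg]

end FieldCharpoly

section CharpolyCount

open Finset Module Polynomial

variable {F E : Type*} [Field F] [Finite F] [Field E] [Fintype E] [Algebra F E]

open Classical in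
theorem card_filter_minpoly_eq {P : F[X]} (hP : P.Monic) (hPirr : Irreducible P)
    (hdvd : P.natDegree ∣ finrank F E) : #{α : E | minpoly F α = P} = P.natDegree := by
  have hroots : ({α : E | minpoly F α = P} : Finset E) = (P.aroots E).toFinset := by
    ext α
    simp only [mem_filter, mem_univ, true_and, Multiset.mem_toFinset, mem_aroots]
    exact ⟨fun h ↦ ⟨hPirr.ne_zero, h ▸ minpoly.aeval F α⟩,
      fun h ↦ (minpoly.eq_of_irreducible_of_monic hPirr h.2 hP).symm⟩
  have := Fintype.ofFinite F
  have hsplits : (P.map (algebraMap F E)).Splits := by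
    refine (FiniteField.isSplittingField_sub E F).splits.of_dvd
      (map_ne_zero (FiniteField.X_pow_card_sub_X_ne_zero _ Fintype.one_lt_card))
      (map_dvd (algebraMap F E) ?_)
    rw [card_eq_pow_finrank (K := F) (V := E), ← Nat.card_eq_fintype_card]
    exact hPirr.natDegree_dvd_iff_dvd_X_pow_card_pow_sub_X.1 hdvd
  have hsep : P.Separable := PerfectField.separable_of_irreducible hPirr
  rw [hroots, Multiset.toFinset_card_of_nodup (nodup_roots hsep.map),
    ← hsplits.natDegree_eq_card_roots, natDegree_map]

open Classical in
theorem card_filter_fieldCharpoly_eq {g : F[X]} (hg : g.Monic)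
    (hdeg : g.natDegree = finrank F E) :
    #{α : E | fieldCharpoly F α = g} = polyVonMangoldt g := by
  by_cases hpp : IsPrimePow g
  · obtain ⟨P, k, hP, hPirr, hk, rfl⟩ := exists_monic_irreducible_pow_eq hg hpp
    rw [natDegree_pow] at hdeg
    rw [polyVonMangoldt_pow_of_irreducible hPirr hk,
      ← card_filter_minpoly_eq hP hPirr (hdeg ▸ dvd_mul_left _ k)]
    refine congrArg card (filter_congr fun α _ ↦ ⟨fun h ↦ ?_, fun h ↦ ?_⟩)
    · exact monic_irreducible_eq_of_pow_eq_pow (minpoly.monic (.of_finite F α))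
        (minpoly.irreducible (.of_finite F α)) hP hPirr finrank_pos.ne' h
    · have hα := natDegree_fieldCharpoly F α
      rw [fieldCharpoly, h, natDegree_pow, ← hdeg] at hα
      rw [fieldCharpoly, h, Nat.eq_of_mul_eq_mul_right hPirr.natDegree_pos hα]
  · rw [polyVonMangoldt_eq_zero hpp, card_eq_zero, filter_eq_empty_iff]
    rintro α - rfl
    exact hpp ((minpoly.irreducible (.of_finite F α)).prime.isPrimePow.pow finrank_pos.ne')

end CharpolyCount

theorem natCast_card_units_s11 (K R : Type*) [GroupWithZero K] [Finite K] [AddGroupWithOne R] :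
    (Nat.card Kˣ : R) = Nat.card K - 1 := by
  rw [Nat.card_units, Nat.cast_sub Nat.card_pos, Nat.cast_one]

section TraceLift

variable {A : Type*} (B : Type*) {M : Type*} [CommRing A] [CommRing B] [Algebra A B] [CommMonoid M]

/-- The additive character of `B` induced by one of `A` through the trace. -/
noncomputable def traceLift (ψ : AddChar A M) : AddChar B M :=
  ψ.compAddMonoidHom (Algebra.trace A B).toAddMonoidHom

theorem traceLift_apply (ψ : AddChar A M) (β : B) :
    traceLift B ψ β = ψ (Algebra.trace A B β) :=
  rfl

theorem traceLift_mulShift_zero (ψ : AddChar A M) : traceLift B (ψ.mulShift 0) = 1 := by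
  ext β
  simp only [traceLift_apply, AddChar.mulShift_apply, zero_mul, AddChar.map_zero_eq_one,
    AddChar.one_apply]

end TraceLift

theorem traceLift_ne_one {F : Type*} (E : Type*) {M : Type*} [Field F] [Field E] [Algebra F E]
    [FiniteDimensional F E] [Algebra.IsSeparable F E] [CommMonoid M] {ψ : AddChar F M}
    (hψ : ψ ≠ 1) : traceLift E ψ ≠ 1 := by
  obtain ⟨x, hx⟩ := AddChar.ne_one_iff.1 hψ
  obtain ⟨α, rfl⟩ := Algebra.trace_surjective F E x
  exact AddChar.ne_one_iff.2 ⟨α, hx⟩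

section NormLift

variable {F : Type*} (E : Type*) {M : Type*} [Field F] [Field E] [Algebra F E]
  [CommMonoidWithZero M]

/-- The multiplicative character of `E` induced by one of `F` through the norm. -/
noncomputable def normLift [FiniteDimensional F E] (χ : MulChar F M) : MulChar E M where
  __ := χ.toMonoidHom.comp (Algebra.norm F)
  map_nonunit' α hα := by
    rw [isUnit_iff_ne_zero, not_not] at hα
    subst hα
    exact (congrArg χ Algebra.norm_zero).trans χ.map_zero

theorem normLift_apply [FiniteDimensional F E] (χ : MulChar F M) (α : E) :
    normLift E χ α = χ (Algebra.norm F α) :=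
  rfl

theorem normLift_one [FiniteDimensional F E] : normLift E (1 : MulChar F M) = 1 := by
  ext α
  rw [normLift_apply, MulChar.one_apply (α.isUnit.map (Algebra.norm F)), MulChar.one_apply_coe]

theorem normLift_ne_one [Finite E] {χ : MulChar F M} (hχ : χ ≠ 1) :
    normLift E χ ≠ 1 := by
  obtain ⟨x, hx⟩ := MulChar.ne_one_iff.1 hχ
  obtain ⟨α, hα⟩ := FiniteField.norm_surjective F E x
  have hunit : IsUnit α := by
    refine isUnit_iff_ne_zero.2 ?_
    rintro rfl
    exact x.ne_zero (hα.symm.trans Algebra.norm_zero)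
  refine MulChar.ne_one_iff.2 ⟨hunit.unit, ?_⟩
  rwa [IsUnit.unit_spec, normLift_apply, hα]

end NormLift

section LiftedGaussSum

open Finset Module

variable {F : Type*} (E : Type*) {R : Type*} [Field F] [Field E] [Algebra F E] [CommRing R]

theorem gaussSum_lift_eq_monicSum [Finite F] [Fintype E] (ψ : AddChar F R) (χ : MulChar F R) :
    gaussSum (normLift E χ) (traceLift E ψ) =
      monicSum (fun g ↦ polyVonMangoldt g * charWeight ψ χ g) (finrank F E) := by
  classical
  rw [gaussSum, monicSum, ← sum_fiberwise_of_maps_to fun α _ ↦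
    mem_monicsOfDegree.2 ⟨fieldCharpoly_monic F α, natDegree_fieldCharpoly F α⟩]
  refine sum_congr rfl fun g hg ↦ ?_
  obtain ⟨hmonic, hdeg⟩ := mem_monicsOfDegree.1 hg
  rw [← card_filter_fieldCharpoly_eq hmonic hdeg, ← nsmul_eq_mul]
  refine sum_eq_card_nsmul fun α hα ↦ ?_
  rw [← (mem_filter.1 hα).2, charWeight_fieldCharpoly, normLift_apply, traceLift_apply, mul_comm]

theorem hasse_davenport_relation [Fintype F] [Fintype E] [IsDomain R] {ψ : AddChar F R} (hψ : ψ ≠ 1)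
    (χ : MulChar F R) :
    -gaussSum (normLift E χ) (traceLift E ψ) = (-gaussSum χ ψ) ^ finrank F E := by
  rw [gaussSum_lift_eq_monicSum, neg_monicSum_polyVonMangoldt
    (fun _ _ ↦ charWeight_mul ψ χ) (charWeight_one ψ χ) (monicSum_charWeight_add_two χ hψ)
    finrank_pos.ne', monicSum_charWeight_one]

open Classical in
theorem gaussSum_lift_mulShift [Fintype F] [Fintype E] [IsDomain R] {ψ : AddChar F R}
    (hψ : ψ ≠ 1) (χ : MulChar F R) (c : F) :
    gaussSum (normLift E χ) (traceLift E (ψ.mulShift c)) =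
      (if c = 0 then gaussSum (normLift E χ) 1 else 0) -
        (-gaussSum χ ψ) ^ finrank F E * (χ⁻¹ ^ finrank F E) c := by
  obtain rfl | hc := eq_or_ne c 0
  · rw [traceLift_mulShift_zero, if_pos rfl, MulChar.map_zero, mul_zero, sub_zero]
  · lift c to Fˣ using hc.isUnit
    rw [if_neg hc, zero_sub, ← neg_eq_iff_eq_neg,
      hasse_davenport_relation E (AddChar.IsPrimitive.of_ne_one hψ hc), gaussSum_mulShift_eq,
      neg_mul_eq_mul_neg, mul_pow, MulChar.pow_apply_coe, mul_comm]

theorem sum_mul_gaussSum_lift_mulShift [Fintype F] [Fintype E] [IsDomain R] {ψ : AddChar F R}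
    (hψ : ψ ≠ 1) (χ : MulChar F R) {a : F} (ha : a ≠ 0) :
    ∑ c, ψ (-(c * a)) * gaussSum (normLift E χ) (traceLift E (ψ.mulShift c)) =
      gaussSum (normLift E χ) 1 - (-gaussSum χ ψ) ^ finrank F E *
        (gaussSum (χ⁻¹ ^ finrank F E) ψ * χ ((-a) ^ finrank F E)) := by
  classical
  have hshift : ∑ c, ψ (-(c * a)) * (χ⁻¹ ^ finrank F E) c =
      gaussSum (χ⁻¹ ^ finrank F E) ψ * χ ((-a) ^ finrank F E) := by
    lift a to Fˣ using ha.isUnit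
    have h := gaussSum_mulShift_eq (χ⁻¹ ^ finrank F E) ψ (-a)
    rw [inv_pow, inv_inv, MulChar.pow_apply_coe, Units.val_neg, ← inv_pow, ← map_pow] at h
    rw [mul_comm, ← h, gaussSum]
    refine sum_congr rfl fun c _ ↦ ?_
    rw [AddChar.mulShift_apply, mul_comm, neg_mul, mul_comm c]
  simp only [gaussSum_lift_mulShift E hψ, mul_sub, sum_sub_distrib, mul_ite, mul_zero, sum_ite_eq',
    mem_univ, if_true, zero_mul, neg_zero, AddChar.map_zero_eq_one, one_mul, mul_left_comm (ψ _),
    ← mul_sum, hshift]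

theorem gaussSum_normLift_one_right [Fintype E] [IsDomain R]
    [DecidableEq (MulChar F R)] (χ : MulChar F R) :
    gaussSum (normLift E χ) 1 = if χ = 1 then (Nat.card Eˣ : R) else 0 := by
  split_ifs with hχ
  · rw [hχ, normLift_one, gaussSum_one_one]
  · exact gaussSum_one_right (normLift_ne_one E hχ)

theorem sum_mul_gaussSum_normLift_one_right [Fintype E] [IsDomain R]
    [Fintype (MulChar F R)] {b : F} (hb : b ≠ 0) :
    ∑ χ : MulChar F R, χ⁻¹ b * gaussSum (normLift E χ) 1 = Nat.card E - 1 := by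
  classical
  simp only [gaussSum_normLift_one_right, mul_ite, mul_zero, sum_ite_eq', mem_univ, if_true,
    inv_one, MulChar.one_apply hb.isUnit, one_mul, natCast_card_units_s11]

end LiftedGaussSum

section CharacterExpansion

open Finset

theorem sum_units_mul_eq_gaussSum {A R : Type*} [CommRing A] [Fintype A] [Fintype Aˣ] [CommRing R]
    (χ : MulChar A R) (ψ : AddChar A R) : ∑ x : Aˣ, ψ x * χ x = gaussSum χ ψ := by
  refine sum_of_injOn Units.val Units.val_injective.injOn (fun _ _ ↦ mem_univ _) (fun x _ hx ↦ ?_)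
    fun _ _ ↦ mul_comm _ _
  rw [χ.map_nonunit fun ⟨u, hu⟩ ↦ hx ⟨u, mem_univ u, hu⟩, zero_mul]

theorem sum_mulChar_apply_s11 {M R : Type*} [CommMonoid M] [Finite M] [CommRing R] [IsDomain R]
    [HasEnoughRootsOfUnity R (Monoid.exponent Mˣ)] [Fintype (MulChar M R)] [DecidableEq M] (x : M) :
    ∑ χ : MulChar M R, χ x = if x = 1 then (Nat.card Mˣ : R) else 0 := by
  split_ifs with hx
  · simp only [hx, map_one, sum_const, card_univ, nsmul_one]
    rw [← Nat.card_eq_fintype_card, MulChar.card_eq_card_units_of_hasEnoughRootsOfUnity]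
  · obtain ⟨χ, hχ⟩ := MulChar.exists_apply_ne_one_of_hasEnoughRootsOfUnity M R hx
    refine eq_zero_of_mul_eq_self_left hχ ?_
    simp only [mul_sum, ← MulChar.mul_apply]
    exact Fintype.sum_bijective _ (Group.mulLeft_bijective χ) _ _ fun _ ↦ rfl

theorem card_mul_card_units_mul_card_fiber {A R ι : Type*} [CommRing A] [Fintype A] [CommRing R]
    [IsDomain R] [HasEnoughRootsOfUnity R (Monoid.exponent Aˣ)] [Fintype (MulChar A R)]
    [Fintype ι] {ψ : AddChar A R} (hψ : ψ.IsPrimitive) (t ν : ι → A) (a : A) (b : Aˣ) :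
    (Fintype.card A : R) * Nat.card Aˣ * Nat.card {i // t i = a ∧ ν i = b} =
      ∑ χ : MulChar A R, χ⁻¹ b * ∑ c, ψ (-(c * a)) * ∑ i, χ (ν i) * ψ (c * t i) := by
  classical
  have hadd (i : ι) : ∑ c, ψ (-(c * a)) * ψ (c * t i) =
      if t i = a then (Fintype.card A : R) else 0 := by
    have h := AddChar.sum_mulShift (t i - a) hψ
    simp only [mul_sub, sub_eq_neg_add (_ * _), AddChar.map_add_eq_mul] at h
    simpa only [sub_eq_zero, Nat.cast_ite, Nat.cast_zero] using h
  have hmul (i : ι) : ∑ χ : MulChar A R, χ⁻¹ b * χ (ν i) =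
      if ν i = b then (Nat.card Aˣ : R) else 0 := by
    have h := sum_mulChar_apply_s11 (R := R) (↑b⁻¹ * ν i)
    simpa only [map_mul, MulChar.inv_apply, Ring.inverse_unit, Units.inv_mul_eq_one, eq_comm]
      using h
  calc (Fintype.card A : R) * Nat.card Aˣ * Nat.card {i // t i = a ∧ ν i = b}
    _ = ∑ i, (∑ c, ψ (-(c * a)) * ψ (c * t i)) * ∑ χ : MulChar A R, χ⁻¹ b * χ (ν i) := by
      simp only [hadd, hmul, ite_zero_mul_ite_zero]
      rw [← sum_filter, sum_const, nsmul_eq_mul, mul_comm,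
        Nat.card_eq_fintype_card (α := Subtype _), Fintype.card_subtype]
    _ = _ := by
      simp only [mul_sum, sum_mul]
      rw [sum_comm]
      refine sum_congr rfl fun χ _ ↦ ?_
      rw [sum_comm]
      exact sum_congr rfl fun c _ ↦ sum_congr rfl fun i _ ↦ by ring

end CharacterExpansion

section CanonicalCharacter

variable (p : ℕ) [Fact p.Prime]

theorem traceLift_stdAddChar_apply (F : Type*) [Field F] [Algebra (ZMod p) F] (x : F) :
    traceLift F (ZMod.stdAddChar (N := p)) x =
      Complex.exp (2 * Real.pi * Complex.I * ((Algebra.trace (ZMod p) F x).val : ℂ) / (p : ℂ)) :=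
  ZMod.toCircle_apply _

theorem stdAddChar_ne_one : ZMod.stdAddChar (N := p) ≠ 1 := by
  refine AddChar.ne_one_iff.2 ⟨1, ?_⟩
  rw [← (ZMod.stdAddChar (N := p)).map_zero_eq_one]
  exact ZMod.injective_stdAddChar.ne one_ne_zero

end CanonicalCharacter

section TraceNormCount

open Finset

theorem trace_norm_count_gauss_sum_general {F E R : Type*} [Field F] [Fintype F] [Field E]
    [Finite E] [Algebra F E] [CommRing R] [IsDomain R]
    [HasEnoughRootsOfUnity R (Monoid.exponent Fˣ)] {n : ℕ} (hE : Module.finrank F E = n + 1)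
    {a b : F} (ha : a ≠ 0) (hb : b ≠ 0) {ψ : AddChar F R} (hψ : ψ ≠ 1) :
    (Fintype.card F : R) * ((Fintype.card F : R) - 1) *
        Nat.card {α : E // Algebra.trace F E α = a ∧ Algebra.norm F α = b} =
      (Fintype.card F : R) ^ (n + 1) - 1 + (-1) ^ n * ∑ᶠ χ : MulChar F R,
        gaussSum χ ψ ^ (n + 1) * gaussSum (χ⁻¹ ^ (n + 1)) ψ *
          χ⁻¹ ((-1) ^ (n + 1) * (b / a ^ (n + 1))) := by
  classical
  have := Fintype.ofFinite E
  have := Fintype.ofFinite (MulChar F R)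
  have hinner (χ : MulChar F R) (c : F) :
      ∑ α : E, χ (Algebra.norm F α) * ψ (c * Algebra.trace F E α) =
        gaussSum (normLift E χ) (traceLift E (ψ.mulShift c)) := rfl
  have harg (χ : MulChar F R) :
      χ⁻¹ ((-1) ^ (n + 1) * (b / a ^ (n + 1))) = χ⁻¹ b * χ ((-a) ^ (n + 1)) := by
    rw [MulChar.inv_apply', MulChar.inv_apply', ← map_mul, neg_pow a, mul_inv, inv_div, ← inv_pow,
      inv_neg_one]
    congr 1
    ring
  have hcount := card_mul_card_units_mul_card_fiber (AddChar.IsPrimitive.of_ne_one hψ)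
    (Algebra.trace F E) (Algebra.norm F) a (Units.mk0 b hb)
  simp only [hinner, sum_mul_gaussSum_lift_mulShift E hψ _ ha, Units.val_mk0, mul_sub,
    sum_sub_distrib, sum_mul_gaussSum_normLift_one_right E hb, natCast_card_units_s11,
    Module.natCard_eq_pow_finrank (K := F) (V := E), hE, Nat.card_eq_fintype_card (α := F),
    Nat.cast_pow] at hcount
  rw [mul_sub, hcount, finsum_eq_sum_of_fintype, mul_sum, sub_eq_add_neg, ← sum_neg_distrib]
  congr 1
  refine sum_congr rfl fun χ _ ↦ ?_
  rw [harg, neg_pow (gaussSum χ ψ)]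
  ring

end TraceNormCount

/-- Gauss sum expression for `N_{n+1}(a,b)`: with `ψ` the canonical additive character of `𝔽_q`
and `G(χ)` the Gauss sum, for `a, b ∈ 𝔽_q^*` and `n ≥ 1`,
`q(q−1)·N_{n+1}(a,b) = q^{n+1} − 1 + (−1)^n Σ_χ G(χ)^{n+1} G(χ̄^{n+1}) χ̄((−1)^{n+1}b/a^{n+1})`. -/
theorem trace_norm_count_gauss_sum (p q n : ℕ) [Fact p.Prime] (hn : 1 ≤ n)
    (F E : Type*) [Field F] [Fintype F] [DecidableEq F] [Algebra (ZMod p) F]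
    [Field E] [Fintype E] [Algebra F E]
    (hq : Fintype.card F = q) (hE : Module.finrank F E = n + 1)
    (a b : F) (ha : a ≠ 0) (hb : b ≠ 0)
    (ψ : F → ℂ)
    (hψ : ∀ x : F, ψ x = Complex.exp (2 * Real.pi * Complex.I *
        ((Algebra.trace (ZMod p) F x).val : ℂ) / (p : ℂ)))
    (G : MulChar F ℂ → ℂ)
    (hG : ∀ χ : MulChar F ℂ, G χ = ∑ x : Fˣ, ψ x * χ x) :
    (q : ℂ) * ((q : ℂ) - 1) *
        (Nat.card {α : E // Algebra.trace F E α = a ∧ Algebra.norm F α = b} : ℂ)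
      = (q : ℂ) ^ (n + 1) - 1 +
          (-1) ^ n * ∑ᶠ χ : MulChar F ℂ,
            G χ ^ (n + 1) * G (χ⁻¹ ^ (n + 1)) * χ⁻¹ ((-1) ^ (n + 1) * (b / a ^ (n + 1))) := by
  have hψ' : ψ = traceLift F (ZMod.stdAddChar (N := p)) := funext fun x ↦
    (hψ x).trans (traceLift_stdAddChar_apply p F x).symm
  have hG' (χ : MulChar F ℂ) : G χ = gaussSum χ (traceLift F (ZMod.stdAddChar (N := p))) := by
    rw [hG, hψ', sum_units_mul_eq_gaussSum]
  simp only [hG', ← hq]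
  exact trace_norm_count_gauss_sum_general hE ha hb (traceLift_ne_one F (stdAddChar_ne_one p))
end
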